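/- Let E be the Euclidean space ℝⁿ, let F, G : E → ℝ be convex functions with F ≥ 0 everywhere, let S ⊆ E be a set, and let (h_k)_{k∈ℕ} be a sequence in S such that G(h_k) > 0 for all k and G(h_k) ≤ M for all k ≥ 1, for some constant M > 0. Suppose for every k there is a subgradient s_k of G at h_k such that h_{k+1} minimises Φ_k(h) = F(h) − (F(h_k)/G(h_k))·⟨h − h_k, s_k⟩ + ‖h − h_k‖² over S. Then for every N ∈ ℕ, the partial sum ∑_{k=0}^{N} ‖h_{k+1} − h_k‖² is bounded by M·F(h₀)/G(h₀); in particular the series ∑_k ‖h_{k+1} − h_k‖² converges. -/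

import Mathlib

open scoped RealInnerProductSpace

/-!
Write `μ = F / G`. Comparing `h (k + 1)` with `h k` in the `k`-th subproblem and bounding the linear
term by the subgradient inequality gives
`F (h (k + 1)) + ‖h (k + 1) - h k‖ ^ 2 ≤ μ (h k) * G (h (k + 1))`.
Since `0 < G (h (k + 1)) ≤ M`, the squared gap is therefore at most
`M * (μ (h k) - μ (h (k + 1)))`, and these bounds telescope.
-/

theorem sum_range_le_of_le_sub_succ {α : Type*} [AddCommGroup α] [PartialOrder α]
    [IsOrderedAddMonoid α] {a b : ℕ → α} (hb : ∀ k, 0 ≤ b k) (hab : ∀ k, a k ≤ b k - b (k + 1))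
    (N : ℕ) : ∑ k ∈ Finset.range N, a k ≤ b 0 :=
  calc
    ∑ k ∈ Finset.range N, a k ≤ ∑ k ∈ Finset.range N, (b k - b (k + 1)) :=
      Finset.sum_le_sum fun k _ ↦ hab k
    _ = b 0 - b N := Finset.sum_range_sub' b N
    _ ≤ b 0 := sub_le_self _ (hb N)

section InversePowerStep

variable {E : Type*} [SeminormedAddCommGroup E] [InnerProductSpace ℝ E]

/-- `s` is a subgradient of `G` at `x`. The linear part of the supporting affine function is
represented by the vector `s` through the inner product. -/
def IsSubgradientAt (G : E → ℝ) (s x : E) : Prop :=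
  ∀ y, G x + ⟪s, y - x⟫ ≤ G y

/-- The objective `Φ` of the update step of the inverse power method, as a function of `y`: the
current point is `x`, its quotient value is `μ`, and `s` is a subgradient there of the
denominator of the quotient. -/
def inversePowerObjective (F : E → ℝ) (μ : ℝ) (s x y : E) : ℝ :=
  F y - μ * ⟪y - x, s⟫ + ‖y - x‖ ^ 2

theorem inversePowerObjective_self (F : E → ℝ) (μ : ℝ) (s x : E) :
    inversePowerObjective F μ s x x = F x := by
  simp [inversePowerObjective]

variable {F G : E → ℝ} {s x y : E}

theorem IsSubgradientAt.add_norm_sub_sq_le {μ : ℝ} (hs : IsSubgradientAt G s x) (hμ : 0 ≤ μ)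
    (hdescent : inversePowerObjective F μ s x y ≤ F x) :
    F y + ‖y - x‖ ^ 2 ≤ F x + μ * (G y - G x) := by
  have hlinear : μ * ⟪y - x, s⟫ ≤ μ * (G y - G x) := by
    rw [real_inner_comm]
    exact mul_le_mul_of_nonneg_left (le_sub_iff_add_le'.2 (hs y)) hμ
  unfold inversePowerObjective at hdescent
  linarith

theorem IsSubgradientAt.norm_sub_sq_le_mul_quotient_sub {M : ℝ} (hs : IsSubgradientAt G s x)
    (hFx : 0 ≤ F x) (hGx : 0 < G x) (hGy : 0 < G y) (hGyM : G y ≤ M)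
    (hdescent : inversePowerObjective F (F x / G x) s x y ≤ F x) :
    ‖y - x‖ ^ 2 ≤ M * (F x / G x - F y / G y) := by
  have hgap : ‖y - x‖ ^ 2 ≤ G y * (F x / G x - F y / G y) :=
    calc
      ‖y - x‖ ^ 2 ≤ F x + F x / G x * (G y - G x) - F y :=
        le_sub_iff_add_le'.2 (hs.add_norm_sub_sq_le (div_nonneg hFx hGx.le) hdescent)
      _ = G y * (F x / G x - F y / G y) := by field_simp; ring
  have hquotient : 0 ≤ F x / G x - F y / G y :=
    nonneg_of_mul_nonneg_right ((sq_nonneg _).trans hgap) hGy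
  exact hgap.trans (mul_le_mul_of_nonneg_right hGyM hquotient)

theorem iterates_gap_summable_general {h : ℕ → E} {M : ℝ} (hF : ∀ k, 0 ≤ F (h k))
    (hG : ∀ k, 0 < G (h k)) (hGM : ∀ k, 1 ≤ k → G (h k) ≤ M)
    (hstep : ∀ k, ∃ s, IsSubgradientAt G s (h k) ∧
      inversePowerObjective F (F (h k) / G (h k)) s (h k) (h (k + 1)) ≤ F (h k)) :
    (∀ N : ℕ, ∑ k ∈ Finset.range (N + 1), ‖h (k + 1) - h k‖ ^ 2 ≤ M * (F (h 0) / G (h 0))) ∧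
      Summable fun k ↦ ‖h (k + 1) - h k‖ ^ 2 := by
  have hM : 0 ≤ M := (hG 1).le.trans (hGM 1 le_rfl)
  have hquotient (k : ℕ) : 0 ≤ M * (F (h k) / G (h k)) :=
    mul_nonneg hM (div_nonneg (hF k) (hG k).le)
  have hgap (k : ℕ) : ‖h (k + 1) - h k‖ ^ 2 ≤
      M * (F (h k) / G (h k)) - M * (F (h (k + 1)) / G (h (k + 1))) := by
    obtain ⟨s, hs, hdescent⟩ := hstep k
    rw [← mul_sub]
    exact hs.norm_sub_sq_le_mul_quotient_sub (hF k) (hG k) (hG (k + 1))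
      (hGM (k + 1) k.succ_pos) hdescent
  have hsum := sum_range_le_of_le_sub_succ hquotient hgap
  exact ⟨fun N ↦ hsum (N + 1), summable_of_sum_range_le (fun _ ↦ sq_nonneg _) hsum⟩

end InversePowerStep

/-- Square-summability of the iterates gap of the generalised inverse power method. -/
theorem iterates_gap_summable
    {n : ℕ}
    (F G : EuclideanSpace ℝ (Fin n) → ℝ)
    (hF : ConvexOn ℝ Set.univ F) (hG : ConvexOn ℝ Set.univ G)
    (hFnonneg : ∀ h, 0 ≤ F h)
    (S : Set (EuclideanSpace ℝ (Fin n)))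
    (h : ℕ → EuclideanSpace ℝ (Fin n)) (hhS : ∀ k, h k ∈ S)
    (hGpos : ∀ k, 0 < G (h k))
    (M : ℝ) (hM : 0 < M) (hGbound : ∀ k : ℕ, 1 ≤ k → G (h k) ≤ M)
    (hstep : ∀ k : ℕ, ∃ s : EuclideanSpace ℝ (Fin n),
      (∀ x, G x ≥ G (h k) + ⟪s, x - h k⟫) ∧
      (∀ x ∈ S,
        F (h (k+1)) - (F (h k) / G (h k)) * ⟪h (k+1) - h k, s⟫ + ‖h (k+1) - h k‖ ^ 2 ≤
          F x - (F (h k) / G (h k)) * ⟪x - h k, s⟫ + ‖x - h k‖ ^ 2)) :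
    (∀ N : ℕ, ∑ k ∈ Finset.range (N + 1), ‖h (k+1) - h k‖ ^ 2 ≤ M * (F (h 0) / G (h 0))) ∧
      Summable (fun k : ℕ => ‖h (k+1) - h k‖ ^ 2) := by
  refine iterates_gap_summable_general (fun k ↦ hFnonneg (h k)) hGpos hGbound fun k ↦ ?_
  obtain ⟨s, hs, hmin⟩ := hstep k
  exact ⟨s, hs, (hmin (h k) (hhS k)).trans_eq (inversePowerObjective_self F _ s (h k))⟩
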